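/- arXiv:1502.07263 — 6 statements merged into one kernel-verified Lean document; each statement's English description precedes it below -/
import Mathlib

section
/- Fix d ∈ ℕ, a smooth function U : ℝ^d → ℝ with ‖∇²U‖_∞ < ∞, and a constant σ > 0, and let L be the kinetic Langevin operator L h = −y·∇_x h + (∇U(x) − y/σ)·∇_y h + Δ_y h. Then for every smooth h : ℝ^d × ℝ^d → ℝ, pointwise on ℝ^d × ℝ^d, (1/2) L(|∇_x h + ∇_y h|²) − (∇_x h + ∇_y h)·((∇_x + ∇_y)(Lh)) ≥ (1/2)|∇_x h|² − (‖∇²U‖_∞ + 1 + 1/σ)² |∇_y h|². -/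
noncomputable section

open scoped BigOperators

open scoped BigOperators

/-- Partial derivative in the `i`-th `x`-direction of `f : ℝ^d × ℝ^d → ℝ`. -/
def pdx {d : ℕ} (i : Fin d) (f : (Fin d → ℝ) × (Fin d → ℝ) → ℝ)
    (z : (Fin d → ℝ) × (Fin d → ℝ)) : ℝ :=
  fderiv ℝ f z (Pi.single i (1 : ℝ), 0)

/-- Partial derivative in the `i`-th `y`-direction of `f : ℝ^d × ℝ^d → ℝ`. -/
def pdy {d : ℕ} (i : Fin d) (f : (Fin d → ℝ) × (Fin d → ℝ) → ℝ)
    (z : (Fin d → ℝ) × (Fin d → ℝ)) : ℝ :=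
  fderiv ℝ f z (0, Pi.single i (1 : ℝ))

/-- `i`-th component of `∇U`. -/
def gradU {d : ℕ} (U : (Fin d → ℝ) → ℝ) (i : Fin d) (x : Fin d → ℝ) : ℝ :=
  fderiv ℝ U x (Pi.single i (1 : ℝ))

/-- `(i,j)` entry of the Hessian matrix `∇²U`. -/
def hessU {d : ℕ} (U : (Fin d → ℝ) → ℝ) (i j : Fin d) (x : Fin d → ℝ) : ℝ :=
  fderiv ℝ (fun u => fderiv ℝ U u (Pi.single j (1 : ℝ))) x (Pi.single i (1 : ℝ))

/-- The kinetic Langevin operator `L h = −y·∇ₓh + (∇U(x) − y/σ)·∇_y h + Δ_y h`. -/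
def langevin {d : ℕ} (U : (Fin d → ℝ) → ℝ) (σ : ℝ)
    (f : (Fin d → ℝ) × (Fin d → ℝ) → ℝ) (z : (Fin d → ℝ) × (Fin d → ℝ)) : ℝ :=
  (∑ i, -(z.2 i) * pdx i f z)
    + (∑ i, (gradU U i z.1 - z.2 i / σ) * pdy i f z)
    + ∑ i, pdy i (fun w => pdy i f w) z

/-- The supremum over x of the Frobenius norm of the Hessian of U, i.e. ‖∇²U‖_∞. -/
def hessNormInf {d : ℕ} (U : (Fin d → ℝ) → ℝ) : ℝ :=
  ⨆ x : Fin d → ℝ, Real.sqrt (∑ i, ∑ j, (hessU U i j x) ^ 2)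

/-- Directional derivative. -/
def dd {d : ℕ} (v : (Fin d → ℝ) × (Fin d → ℝ)) (f : (Fin d → ℝ) × (Fin d → ℝ) → ℝ)
    (z : (Fin d → ℝ) × (Fin d → ℝ)) : ℝ := fderiv ℝ f z v

theorem pdx_eq {d : ℕ} (i : Fin d) : pdx i = dd ((Pi.single i (1 : ℝ), 0) : (Fin d → ℝ) × (Fin d → ℝ)) := rfl

theorem pdy_eq {d : ℕ} (i : Fin d) : pdy i = dd ((0, Pi.single i (1 : ℝ)) : (Fin d → ℝ) × (Fin d → ℝ)) := rfl

section
variable {d : ℕ} {f g : (Fin d → ℝ) × (Fin d → ℝ) → ℝ} (v w z : (Fin d → ℝ) × (Fin d → ℝ))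

theorem dd_smooth (hf : ContDiff ℝ (⊤ : ℕ∞) f) : ContDiff ℝ (⊤ : ℕ∞) (dd v f) :=
  (hf.fderiv_right (m := ((⊤ : ℕ∞) : WithTop ℕ∞)) (by simp)).clm_apply contDiff_const

theorem smooth_diff (hf : ContDiff ℝ (⊤ : ℕ∞) f) : DifferentiableAt ℝ f z :=
  (hf.differentiable (by simp)).differentiableAt

theorem dd_add (hf : DifferentiableAt ℝ f z) (hg : DifferentiableAt ℝ g z) :
    dd v (fun u => f u + g u) z = dd v f z + dd v g z := by
  unfold dd
  rw [fderiv_fun_add hf hg]; rfl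

theorem dd_mul (hf : DifferentiableAt ℝ f z) (hg : DifferentiableAt ℝ g z) :
    dd v (fun u => f u * g u) z = f z * dd v g z + dd v f z * g z := by
  unfold dd
  rw [fderiv_fun_mul hf hg]; simp [mul_comm]

theorem dd_sum {ι : Type} (s : Finset ι) {F : ι → (Fin d → ℝ) × (Fin d → ℝ) → ℝ}
    (hf : ∀ i, DifferentiableAt ℝ (F i) z) :
    dd v (fun u => ∑ i ∈ s, F i u) z = ∑ i ∈ s, dd v (F i) z := by
  unfold dd
  rw [fderiv_fun_sum (fun i _ => hf i)]; simp

theorem dd_comm (hf : ContDiff ℝ (⊤ : ℕ∞) f) : dd v (dd w f) z = dd w (dd v f) z := by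
  have h1 : DifferentiableAt ℝ (fderiv ℝ f) z :=
    ((hf.fderiv_right (m := ((⊤ : ℕ∞) : WithTop ℕ∞)) (by simp)).differentiable (by simp)).differentiableAt
  have key : ∀ a b, dd a (dd b f) z = fderiv ℝ (fderiv ℝ f) z a b := by
    intro a b
    change fderiv ℝ (fun u => fderiv ℝ f u b) z a = _
    rw [fderiv_clm_apply h1 (differentiableAt_const _)]
    simp
  rw [key, key]
  have := (hf.contDiffAt (x := z)).isSymmSndFDerivAt (by
    simp only [minSmoothness_of_isRCLikeNormedField]
    exact WithTop.coe_le_coe.2 (le_top : (2 : ℕ∞) ≤ ⊤))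
  exact this v w

theorem dd_split (i : Fin d) :
    pdx i f z + pdy i f z = dd (Pi.single i (1 : ℝ), Pi.single i (1 : ℝ)) f z := by
  simp only [pdx, pdy, dd]
  rw [← map_add]; simp

theorem gradU_smooth {U : (Fin d → ℝ) → ℝ} (hU : ContDiff ℝ (⊤ : ℕ∞) U) (i : Fin d) :
    ContDiff ℝ (⊤ : ℕ∞) (gradU U i) :=
  (hU.fderiv_right (m := ((⊤ : ℕ∞) : WithTop ℕ∞)) (by simp)).clm_apply contDiff_const

theorem coefy_diff (i : Fin d) :
    HasFDerivAt (fun u : (Fin d → ℝ) × (Fin d → ℝ) => u.2 i)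
      ((ContinuousLinearMap.proj i).comp (ContinuousLinearMap.snd ℝ (Fin d → ℝ) (Fin d → ℝ))) z :=
  ((ContinuousLinearMap.proj (R := ℝ) (φ := fun _ : Fin d => ℝ) i).comp
    (ContinuousLinearMap.snd ℝ (Fin d → ℝ) (Fin d → ℝ))).hasFDerivAt

theorem coefU_diff {U : (Fin d → ℝ) → ℝ} (hU : ContDiff ℝ (⊤ : ℕ∞) U) (i : Fin d) :
    HasFDerivAt (fun u : (Fin d → ℝ) × (Fin d → ℝ) => gradU U i u.1)
      ((fderiv ℝ (gradU U i) z.1).comp (ContinuousLinearMap.fst ℝ (Fin d → ℝ) (Fin d → ℝ))) z := by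
  have h1 : HasFDerivAt (gradU U i) (fderiv ℝ (gradU U i) z.1) z.1 :=
    ((gradU_smooth hU i).differentiable (by simp)).differentiableAt.hasFDerivAt
  exact h1.comp z hasFDerivAt_fst

theorem dd_langevin {U : (Fin d → ℝ) → ℝ} (hU : ContDiff ℝ (⊤ : ℕ∞) U) (σ : ℝ)
    (hf : ContDiff ℝ (⊤ : ℕ∞) f) :
    dd v (langevin U σ f) z = langevin U σ (dd v f) z + (∑ i, -(v.2 i) * pdx i f z)
      + ∑ i, (fderiv ℝ (gradU U i) z.1 v.1 - v.2 i / σ) * pdy i f z := by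
  have hA : ∀ i : Fin d, HasFDerivAt (fun u : (Fin d → ℝ) × (Fin d → ℝ) => -(u.2 i)) _ z :=
    fun i => (coefy_diff z i).neg
  have hB : ∀ i : Fin d, HasFDerivAt
      (fun u : (Fin d → ℝ) × (Fin d → ℝ) => gradU U i u.1 - u.2 i * σ⁻¹) _ z :=
    fun i => (coefU_diff z hU i).sub ((coefy_diff z i).mul_const σ⁻¹)
  have hx : ∀ i, DifferentiableAt ℝ (pdx i f) z := fun i => smooth_diff z (dd_smooth _ hf)
  have hy : ∀ i, DifferentiableAt ℝ (pdy i f) z := fun i => smooth_diff z (dd_smooth _ hf)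
  have hyy : ∀ i, DifferentiableAt ℝ (pdy i (pdy i f)) z :=
    fun i => smooth_diff z (dd_smooth _ (dd_smooth _ hf))
  have h1 : ∀ i, DifferentiableAt ℝ (fun u => -(u.2 i) * pdx i f u) z :=
    fun i => (hA i).differentiableAt.mul (hx i)
  have h2 : ∀ i, DifferentiableAt ℝ (fun u => (gradU U i u.1 - u.2 i * σ⁻¹) * pdy i f u) z :=
    fun i => (hB i).differentiableAt.mul (hy i)
  have e : langevin U σ f = fun u => ((∑ i, -(u.2 i) * pdx i f u)
    + (∑ i, (gradU U i u.1 - u.2 i * σ⁻¹) * pdy i f u))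
    + ∑ i, pdy i (pdy i f) u := rfl
  rw [e, dd_add _ _ ((DifferentiableAt.fun_sum fun i _ => h1 i).fun_add
      (DifferentiableAt.fun_sum fun i _ => h2 i)) (DifferentiableAt.fun_sum fun i _ => hyy i),
    dd_add _ _ (DifferentiableAt.fun_sum fun i _ => h1 i) (DifferentiableAt.fun_sum fun i _ => h2 i),
    dd_sum _ _ _ h1, dd_sum _ _ _ h2, dd_sum _ _ _ hyy]
  have k1 : ∀ i, dd v (fun u => -(u.2 i) * pdx i f u) z
      = -(z.2 i) * pdx i (dd v f) z + -(v.2 i) * pdx i f z := by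
    intro i
    rw [dd_mul _ _ (hA i).differentiableAt (hx i), pdx_eq, dd_comm _ _ _ hf]
    congr 2
    unfold dd
    rw [(hA i).fderiv]; simp
  have k2 : ∀ i, dd v (fun u => (gradU U i u.1 - u.2 i * σ⁻¹) * pdy i f u) z
      = (gradU U i z.1 - z.2 i / σ) * pdy i (dd v f) z
        + (fderiv ℝ (gradU U i) z.1 v.1 - v.2 i / σ) * pdy i f z := by
    intro i
    rw [dd_mul _ _ (hB i).differentiableAt (hy i), pdy_eq, dd_comm _ _ _ hf]
    congr 2
    unfold dd
    rw [(hB i).fderiv]; simp [div_eq_mul_inv, mul_comm]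
  have k3 : ∀ i, dd v (pdy i (pdy i f)) z = pdy i (pdy i (dd v f)) z := by
    intro i
    rw [pdy_eq, dd_comm _ _ _ (dd_smooth _ hf)]
    congr 1
    funext u
    exact dd_comm _ _ _ hf
  simp only [k1, k2, k3, Finset.sum_add_distrib]
  unfold langevin
  ring

theorem langevin_sumsq (U : (Fin d → ℝ) → ℝ) (σ : ℝ)
    {G : Fin d → (Fin d → ℝ) × (Fin d → ℝ) → ℝ} (hG : ∀ i, ContDiff ℝ (⊤ : ℕ∞) (G i)) :
    (1 / 2) * langevin U σ (fun w => ∑ i, (G i w) ^ 2) z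
      = (∑ i, G i z * langevin U σ (G i) z) + ∑ i, ∑ j, (pdy j (G i) z) ^ 2 := by
  have hd : ∀ i z, DifferentiableAt ℝ (G i) z := fun i z => smooth_diff z (hG i)
  have k : ∀ a, dd a (fun w => ∑ i, (G i w) ^ 2) = fun u => ∑ i, 2 * (G i u * dd a (G i) u) := by
    intro a
    funext u
    rw [dd_sum _ _ _ (fun i => (hd i u).fun_pow 2)]
    refine Finset.sum_congr rfl fun i _ => ?_
    simp only [pow_two]
    rw [dd_mul _ _ (hd i u) (hd i u)]; ring
  have kk : ∀ a, dd a (dd a (fun w => ∑ i, (G i w) ^ 2)) z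
      = ∑ i, 2 * (G i z * dd a (dd a (G i)) z + (dd a (G i) z) ^ 2) := by
    intro a
    have hda : ∀ i, DifferentiableAt ℝ (dd a (G i)) z := fun i => smooth_diff z (dd_smooth _ (hG i))
    rw [k, dd_sum _ _ _ (fun i => ((hd i z).fun_mul (hda i)).const_mul 2)]
    refine Finset.sum_congr rfl fun i _ => ?_
    rw [dd_mul _ _ (differentiableAt_const _) ((hd i z).fun_mul (hda i)), dd_mul _ _ (hd i z) (hda i)]
    simp [dd]; ring
  have e : ∀ f, langevin U σ f z = (∑ j, (-(z.2 j) * pdx j f z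
    + (gradU U j z.1 - z.2 j / σ) * pdy j f z + pdy j (pdy j f) z)) := by
    intro f
    simp only [Finset.sum_add_distrib]; rfl
  simp only [e, pdx_eq, pdy_eq, kk]
  simp only [k, Finset.mul_sum, ← Finset.sum_add_distrib]
  rw [Finset.sum_comm]
  refine Finset.sum_congr rfl fun j _ => ?_
  refine Finset.sum_congr rfl fun i _ => ?_
  ring

end

theorem cs_bound {d : ℕ} (a b : Fin d → ℝ) :
    |∑ i, a i * b i| ≤ √(∑ i, a i ^ 2) * √(∑ i, b i ^ 2) := by
  rw [← Real.sqrt_mul (Finset.sum_nonneg fun i _ => sq_nonneg _)]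
  exact Real.abs_le_sqrt (Finset.sum_mul_sq_le_sq_mul_sq _ _ _)

theorem alg_bound {d : ℕ} (a b : Fin d → ℝ) (H : Fin d → Fin d → ℝ) (K s : ℝ) (hs : 0 < s)
    (hK : √(∑ i, ∑ j, H i j ^ 2) ≤ K) :
    (1 / 2) * (∑ i, a i ^ 2) - (K + 1 + s) ^ 2 * ∑ i, b i ^ 2
      ≤ ∑ i, (a i + b i) * (a i - (∑ j, H i j * b j) + s * b i) := by
  set w : Fin d → ℝ := fun i => ∑ j, H i j * b j with hw
  have hA : 0 ≤ ∑ i, a i ^ 2 := Finset.sum_nonneg fun i _ => sq_nonneg _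
  have hB : 0 ≤ ∑ i, b i ^ 2 := Finset.sum_nonneg fun i _ => sq_nonneg _
  have hK0 : 0 ≤ K := (Real.sqrt_nonneg _).trans hK
  have hW : √(∑ i, w i ^ 2) ≤ K * √(∑ i, b i ^ 2) := by
    refine le_trans ?_ (mul_le_mul_of_nonneg_right hK (Real.sqrt_nonneg _))
    rw [← Real.sqrt_mul (Finset.sum_nonneg fun i _ => Finset.sum_nonneg fun j _ => sq_nonneg _)]
    apply Real.sqrt_le_sqrt
    rw [Finset.sum_mul]
    exact Finset.sum_le_sum fun i _ => Finset.sum_mul_sq_le_sq_mul_sq _ _ _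
  have c1 := abs_le.1 (cs_bound a b)
  have c2 := abs_le.1 (cs_bound a w)
  have c3 := abs_le.1 (cs_bound b w)
  have ex : ∑ i, (a i + b i) * (a i - (∑ j, H i j * b j) + s * b i)
      = (∑ i, a i ^ 2) + (1 + s) * (∑ i, a i * b i) - (∑ i, a i * w i)
        - (∑ i, b i * w i) + s * ∑ i, b i ^ 2 := by
    simp only [Finset.mul_sum, ← Finset.sum_add_distrib, ← Finset.sum_sub_distrib]
    refine Finset.sum_congr rfl fun i _ => ?_
    simp only [hw]; ring
  rw [ex]
  have sa := Real.sq_sqrt hA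
  have sb := Real.sq_sqrt hB
  have pa := Real.sqrt_nonneg (∑ i, a i ^ 2)
  have pb := Real.sqrt_nonneg (∑ i, b i ^ 2)
  have d2 := mul_le_mul_of_nonneg_left hW pa
  have d3 := mul_le_mul_of_nonneg_left hW pb
  have d1 := mul_le_mul_of_nonneg_left c1.1 (by linarith : (0:ℝ) ≤ 1 + s)
  generalize √(∑ i, a i ^ 2) = p at *
  generalize √(∑ i, b i ^ 2) = q at *
  rw [← sa, ← sb]
  have f1 : 0 ≤ (p - (K + 1 + s) * q) ^ 2 := sq_nonneg _
  have f2 : 0 ≤ ((K + 1 + s) ^ 2 / 2 - K) * q ^ 2 := by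
    apply mul_nonneg _ (sq_nonneg _)
    nlinarith [mul_nonneg hK0 hs.le, sq_nonneg K, sq_nonneg s]
  have f3 : 0 ≤ s * q ^ 2 := by positivity
  nlinarith [c2.2, c3.2]

/-- For the kinetic Langevin operator and the quadratic functional
Φ(h) = |∇ₓh + ∇_y h|², pointwise
Γ_{L,Φ}(h) ≥ (1/2)|∇ₓh|² − (‖∇²U‖_∞ + 1 + 1/σ)²|∇_y h|². -/
theorem stmt2 {d : ℕ} (U : (Fin d → ℝ) → ℝ) (hU : ContDiff ℝ (⊤ : ℕ∞) U)
    (hK : BddAbove (Set.range fun x : Fin d → ℝ =>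
      Real.sqrt (∑ i, ∑ j, (hessU U i j x) ^ 2)))
    (σ : ℝ) (hσ : 0 < σ)
    (h : (Fin d → ℝ) × (Fin d → ℝ) → ℝ) (hh : ContDiff ℝ (⊤ : ℕ∞) h)
    (z : (Fin d → ℝ) × (Fin d → ℝ)) :
    (1 / 2) * langevin U σ (fun w => ∑ i, (pdx i h w + pdy i h w) ^ 2) z
        - (∑ i, (pdx i h z + pdy i h z)
            * (pdx i (langevin U σ h) z + pdy i (langevin U σ h) z))
      ≥ (1 / 2) * (∑ i, (pdx i h z) ^ 2)
        - (hessNormInf U + 1 + 1 / σ) ^ 2 * ∑ i, (pdy i h z) ^ 2 := by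
  have hG : ∀ i : Fin d, ContDiff ℝ (⊤ : ℕ∞)
      (dd ((Pi.single i (1 : ℝ), Pi.single i (1 : ℝ)) : (Fin d → ℝ) × (Fin d → ℝ)) h) :=
    fun i => dd_smooth _ hh
  have hbound := alg_bound (fun i => pdx i h z) (fun i => pdy i h z)
    (fun i j => hessU U i j z.1) (hessNormInf U) (1 / σ) (by positivity)
    (le_ciSup hK z.1)
  refine ge_iff_le.2 (hbound.trans ?_)
  have hsplit := @dd_split d
  have e1 : ∀ i, pdx i h z + pdy i h z
    = dd ((Pi.single i (1 : ℝ), Pi.single i (1 : ℝ)) : (Fin d → ℝ) × (Fin d → ℝ)) h z :=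
    fun i => dd_split z i
  simp only [dd_split]
  rw [langevin_sumsq z U σ hG]
  have hnn : 0 ≤ ∑ i, ∑ j, (pdy j (dd ((Pi.single i (1 : ℝ), Pi.single i (1 : ℝ)) :
      (Fin d → ℝ) × (Fin d → ℝ)) h) z) ^ 2 :=
    Finset.sum_nonneg fun i _ => Finset.sum_nonneg fun j _ => sq_nonneg _
  rw [add_sub_right_comm, ← Finset.sum_sub_distrib]
  refine le_add_of_le_of_nonneg (le_of_eq ?_) hnn
  refine Finset.sum_congr rfl fun i _ => ?_
  rw [dd_langevin _ z hU σ hh]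
  have s1 : ∑ j, -((Pi.single i (1 : ℝ) : Fin d → ℝ) j) * pdx j h z = - pdx i h z := by
    rw [Finset.sum_eq_single i] <;> simp +contextual [Pi.single_apply]
  have s2 : ∑ j, (fderiv ℝ (gradU U j) z.1 (Pi.single i (1 : ℝ))
      - (Pi.single i (1 : ℝ) : Fin d → ℝ) j / σ) * pdy j h z
      = (∑ j, hessU U i j z.1 * pdy j h z) - 1 / σ * pdy i h z := by
    simp only [sub_mul, Finset.sum_sub_distrib]
    congr 1
    rw [Finset.sum_eq_single i] <;> simp +contextual [Pi.single_apply]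
  simp only [s1, s2]
  ring
end
end

section
/- Let b : ℝ^n → ℝ^n be a smooth vector field and B : ℝ^n → (symmetric positive semidefinite n×n matrices) a smooth matrix field, and define the diffusion operator L f = b·∇f + ∇·(B∇f). Let M be a constant real k×n matrix. Then for every smooth h : ℝ^n → (0,∞), pointwise on ℝ^n, (1/2) L(|M∇h|²/h) − (M∇h)·M∇(Lh)/h + |M∇h|² Lh/(2h²) ≥ (M∇h)·([L, M∇]h)/h, where [L, M∇]h denotes the vector with components L((M∇h)_i) − (M∇(Lh))_i, i = 1,…,k. -/
noncomputable section

open scoped BigOperators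

/-- Partial derivative of `f : ℝ^n → ℝ` in the `i`-th coordinate direction. -/
def pd {n : ℕ} (i : Fin n) (f : (Fin n → ℝ) → ℝ) (x : Fin n → ℝ) : ℝ :=
  fderiv ℝ f x (Pi.single i (1 : ℝ))

/-- Diffusion operator `L f = b·∇f + ∇·(B∇f)` with variable diffusion matrix field `B`. -/
def diffOpV {n : ℕ} (b : (Fin n → ℝ) → Fin n → ℝ)
    (B : (Fin n → ℝ) → Matrix (Fin n) (Fin n) ℝ)
    (f : (Fin n → ℝ) → ℝ) (x : Fin n → ℝ) : ℝ :=
  (∑ i, b x i * pd i f x) + ∑ i, pd i (fun z => ∑ j, B z i j * pd j f z) x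

/-- The `i`-th component of `M ∇ f`. -/
def Mgrad {n k : ℕ} (M : Matrix (Fin k) (Fin n) ℝ) (f : (Fin n → ℝ) → ℝ)
    (x : Fin n → ℝ) (i : Fin k) : ℝ :=
  ∑ j, M i j * pd j f x

theorem pd_smooth {n : ℕ} (i : Fin n) {f : (Fin n → ℝ) → ℝ}
    (hf : ContDiff ℝ (⊤ : ℕ∞) f) : ContDiff ℝ (⊤ : ℕ∞) (pd i f) := by
  have h1 : ContDiff ℝ (⊤ : ℕ∞) (fderiv ℝ f) := hf.fderiv_right (by simp)
  exact h1.clm_apply contDiff_const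

theorem smooth_diffAt {n : ℕ} {f : (Fin n → ℝ) → ℝ}
    (hf : ContDiff ℝ (⊤ : ℕ∞) f) (x : Fin n → ℝ) : DifferentiableAt ℝ f x :=
  (hf.differentiable (by simp)) x

theorem pd_mul {n : ℕ} (i : Fin n) {f g : (Fin n → ℝ) → ℝ}
    (hf : ContDiff ℝ (⊤ : ℕ∞) f) (hg : ContDiff ℝ (⊤ : ℕ∞) g) (x : Fin n → ℝ) :
    pd i (fun z => f z * g z) x = f x * pd i g x + g x * pd i f x := by
  unfold pd
  rw [fderiv_fun_mul (smooth_diffAt hf x) (smooth_diffAt hg x)]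
  simp

theorem pd_add {n : ℕ} (i : Fin n) {f g : (Fin n → ℝ) → ℝ}
    (hf : ContDiff ℝ (⊤ : ℕ∞) f) (hg : ContDiff ℝ (⊤ : ℕ∞) g) (x : Fin n → ℝ) :
    pd i (fun z => f z + g z) x = pd i f x + pd i g x := by
  unfold pd
  rw [fderiv_fun_add (smooth_diffAt hf x) (smooth_diffAt hg x)]
  simp

theorem pd_sum {n k : ℕ} (i : Fin n) {f : Fin k → (Fin n → ℝ) → ℝ}
    (hf : ∀ l, ContDiff ℝ (⊤ : ℕ∞) (f l)) (x : Fin n → ℝ) :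
    pd i (fun z => ∑ l, f l z) x = ∑ l, pd i (f l) x := by
  unfold pd
  rw [fderiv_fun_sum (fun l _ => smooth_diffAt (hf l) x)]
  simp

/-- The bilinear form `∇f · B ∇g`. -/
def carre {n : ℕ} (B : (Fin n → ℝ) → Matrix (Fin n) (Fin n) ℝ)
    (f g : (Fin n → ℝ) → ℝ) (x : Fin n → ℝ) : ℝ :=
  ∑ i, pd i f x * ∑ j, B x i j * pd j g x

theorem flux_smooth {n : ℕ} {B : (Fin n → ℝ) → Matrix (Fin n) (Fin n) ℝ}
    (hB : ∀ i j, ContDiff ℝ (⊤ : ℕ∞) fun x => B x i j)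
    {f : (Fin n → ℝ) → ℝ} (hf : ContDiff ℝ (⊤ : ℕ∞) f) (i : Fin n) :
    ContDiff ℝ (⊤ : ℕ∞) (fun z => ∑ j, B z i j * pd j f z) :=
  ContDiff.sum fun j _ => (hB i j).mul (pd_smooth j hf)

theorem carre_comm {n : ℕ} {B : (Fin n → ℝ) → Matrix (Fin n) (Fin n) ℝ}
    (hBpsd : ∀ x, (B x).PosSemidef) (f g : (Fin n → ℝ) → ℝ) (x : Fin n → ℝ) :
    carre B f g x = carre B g f x := by
  unfold carre
  simp only [Finset.mul_sum]
  rw [Finset.sum_comm]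
  refine Finset.sum_congr rfl fun i _ => Finset.sum_congr rfl fun j _ => ?_
  have : B x j i = B x i j := by
    have := (hBpsd x).isHermitian.apply i j
    simpa using this
  rw [this]; ring

theorem carre_mul {n : ℕ} {B : (Fin n → ℝ) → Matrix (Fin n) (Fin n) ℝ}
    {f g v : (Fin n → ℝ) → ℝ}
    (hf : ContDiff ℝ (⊤ : ℕ∞) f) (hg : ContDiff ℝ (⊤ : ℕ∞) g) (x : Fin n → ℝ) :
    carre B (fun z => f z * g z) v x = f x * carre B g v x + g x * carre B f v x := by
  unfold carre
  rw [Finset.mul_sum, Finset.mul_sum, ← Finset.sum_add_distrib]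
  refine Finset.sum_congr rfl fun i _ => ?_
  rw [pd_mul i hf hg]; ring

theorem carre_nonneg {n : ℕ} {B : (Fin n → ℝ) → Matrix (Fin n) (Fin n) ℝ}
    (hBpsd : ∀ x, (B x).PosSemidef) (f : (Fin n → ℝ) → ℝ) (x : Fin n → ℝ) :
    0 ≤ carre B f f x := by
  have := (hBpsd x).dotProduct_mulVec_nonneg (fun i => pd i f x)
  simpa [carre, dotProduct, Matrix.mulVec] using this

theorem diffOpV_mul {n : ℕ} (b : (Fin n → ℝ) → Fin n → ℝ)
    {B : (Fin n → ℝ) → Matrix (Fin n) (Fin n) ℝ}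
    (hB : ∀ i j, ContDiff ℝ (⊤ : ℕ∞) fun x => B x i j)
    (hBpsd : ∀ x, (B x).PosSemidef)
    {f g : (Fin n → ℝ) → ℝ}
    (hf : ContDiff ℝ (⊤ : ℕ∞) f) (hg : ContDiff ℝ (⊤ : ℕ∞) g) (x : Fin n → ℝ) :
    diffOpV b B (fun z => f z * g z) x
      = f x * diffOpV b B g x + g x * diffOpV b B f x + 2 * carre B f g x := by
  have key : ∀ i, pd i (fun z => ∑ j, B z i j * pd j (fun z => f z * g z) z) x
      = f x * pd i (fun z => ∑ j, B z i j * pd j g z) x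
        + g x * pd i (fun z => ∑ j, B z i j * pd j f z) x
        + pd i f x * (∑ j, B x i j * pd j g x) + pd i g x * (∑ j, B x i j * pd j f x) := by
    intro i
    have e : (fun z => ∑ j, B z i j * pd j (fun z => f z * g z) z)
        = fun z => f z * (∑ j, B z i j * pd j g z) + g z * (∑ j, B z i j * pd j f z) := by
      funext z
      rw [Finset.mul_sum, Finset.mul_sum, ← Finset.sum_add_distrib]
      refine Finset.sum_congr rfl fun j _ => ?_
      rw [pd_mul j hf hg]; ring
    have sg := flux_smooth hB hg i
    have sf := flux_smooth hB hf i
    rw [e, pd_add i (hf.mul sg) (hg.mul sf), pd_mul i hf sg, pd_mul i hg sf]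
    ring
  have c : 2 * carre B f g x = carre B f g x + carre B g f x := by
    rw [carre_comm hBpsd g f]; ring
  rw [c]
  unfold diffOpV carre
  simp only [key]
  simp only [pd_mul _ hf hg]
  simp only [Finset.sum_add_distrib, mul_add, ← Finset.mul_sum]
  have e1 : ∑ i, b x i * (f x * pd i g x) = f x * ∑ i, b x i * pd i g x := by
    rw [Finset.mul_sum]; exact Finset.sum_congr rfl fun i _ => by ring
  have e2 : ∑ i, b x i * (g x * pd i f x) = g x * ∑ i, b x i * pd i f x := by
    rw [Finset.mul_sum]; exact Finset.sum_congr rfl fun i _ => by ring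
  rw [e1, e2]; ring

theorem diffOpV_sum {n k : ℕ} (b : (Fin n → ℝ) → Fin n → ℝ)
    {B : (Fin n → ℝ) → Matrix (Fin n) (Fin n) ℝ}
    (hB : ∀ i j, ContDiff ℝ (⊤ : ℕ∞) fun x => B x i j)
    {f : Fin k → (Fin n → ℝ) → ℝ}
    (hf : ∀ l, ContDiff ℝ (⊤ : ℕ∞) (f l)) (x : Fin n → ℝ) :
    diffOpV b B (fun z => ∑ l, f l z) x = ∑ l, diffOpV b B (f l) x := by
  have key : ∀ i, pd i (fun z => ∑ j, B z i j * pd j (fun z => ∑ l, f l z) z) x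
      = ∑ l, pd i (fun z => ∑ j, B z i j * pd j (f l) z) x := by
    intro i
    rw [← pd_sum i (fun l => flux_smooth hB (hf l) i)]
    congr 1
    funext z
    rw [Finset.sum_comm]
    refine Finset.sum_congr rfl fun j _ => ?_
    rw [pd_sum j hf, Finset.mul_sum]
  unfold diffOpV
  simp only [key]
  simp only [pd_sum _ hf, Finset.mul_sum, Finset.sum_add_distrib]
  congr 1
  · exact Finset.sum_comm
  · exact Finset.sum_comm

/-- For the diffusion operator `L` and the Fisher-information-like functional
`Φ_M(h) = |M∇h|²/h`, pointwise
`(1/2)L(|M∇h|²/h) − (M∇h)·M∇(Lh)/h + |M∇h|²Lh/(2h²) ≥ (M∇h)·([L,M∇]h)/h`. -/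
theorem stmt5 {n k : ℕ} (b : (Fin n → ℝ) → Fin n → ℝ)
    (hb : ∀ i, ContDiff ℝ (⊤ : ℕ∞) fun x => b x i)
    (B : (Fin n → ℝ) → Matrix (Fin n) (Fin n) ℝ)
    (hBsmooth : ∀ i j, ContDiff ℝ (⊤ : ℕ∞) fun x => B x i j)
    (hBpsd : ∀ x, (B x).PosSemidef)
    (M : Matrix (Fin k) (Fin n) ℝ)
    (h : (Fin n → ℝ) → ℝ) (hh : ContDiff ℝ (⊤ : ℕ∞) h)
    (hpos : ∀ x, 0 < h x) (x : Fin n → ℝ) :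
    (1 / 2) * diffOpV b B (fun z => (∑ i, (Mgrad M h z i) ^ 2) / h z) x
        - (∑ i, Mgrad M h x i * Mgrad M (diffOpV b B h) x i) / h x
        + (∑ i, (Mgrad M h x i) ^ 2) * diffOpV b B h x / (2 * (h x) ^ 2)
      ≥ (∑ i, Mgrad M h x i
            * (diffOpV b B (fun z => Mgrad M h z i) x
                - Mgrad M (diffOpV b B h) x i)) / h x := by
  have hne : ∀ z, h z ≠ 0 := fun z => (hpos z).ne'
  have su : ∀ i, ContDiff ℝ (⊤ : ℕ∞) (fun z => Mgrad M h z i) := fun i =>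
    ContDiff.sum fun j _ => contDiff_const.mul (pd_smooth j hh)
  have sv : ∀ i, ContDiff ℝ (⊤ : ℕ∞) (fun z => Mgrad M h z i / h z) := fun i =>
    (su i).div hh hne
  have eF : (fun z => (∑ i, (Mgrad M h z i) ^ 2) / h z)
      = fun z => ∑ i, Mgrad M h z i * (Mgrad M h z i / h z) := by
    funext z
    rw [Finset.sum_div]
    exact Finset.sum_congr rfl fun i _ => by ring
  have eu : ∀ i, (fun z => Mgrad M h z i) = fun z => h z * (Mgrad M h z i / h z) := by
    intro i; funext z
    have := hne z
    field_simp
  have hx := hpos x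
  have hxne := hne x
  rw [eF, diffOpV_sum b hBsmooth (fun i => (su i).mul (sv i))]
  rw [ge_iff_le, ← sub_nonneg]
  have main : ∀ i, 0 ≤ (1 / 2) * diffOpV b B (fun z => Mgrad M h z i * (Mgrad M h z i / h z)) x
      - Mgrad M h x i * Mgrad M (diffOpV b B h) x i / h x
      + (Mgrad M h x i) ^ 2 * diffOpV b B h x / (2 * (h x) ^ 2)
      - Mgrad M h x i * (diffOpV b B (fun z => Mgrad M h z i) x
                - Mgrad M (diffOpV b B h) x i) / h x := by
    intro i
    have h1 := diffOpV_mul b hBsmooth hBpsd (su i) (sv i) x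
    have h2 := diffOpV_mul b hBsmooth hBpsd hh (sv i) x
    rw [← eu i] at h2
    have h3 := carre_mul (B := B) (v := fun z => Mgrad M h z i / h z) hh (sv i) x
    rw [← eu i] at h3
    have h4 := carre_nonneg hBpsd (fun z => Mgrad M h z i / h z) x
    have h5 : Mgrad M h x i = h x * (Mgrad M h x i / h x) := by field_simp
    rw [h1, h3]
    generalize carre B (fun z => Mgrad M h z i / h z) (fun z => Mgrad M h z i / h z) x = G at *
    generalize carre B h (fun z => Mgrad M h z i / h z) x = C at *
    generalize diffOpV b B (fun z => Mgrad M h z i / h z) x = Lv at *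
    generalize diffOpV b B (fun z => Mgrad M h z i) x = Lu at *
    generalize Mgrad M (diffOpV b B h) x i = N at *
    generalize diffOpV b B h x = Lh at *
    generalize Mgrad M h x i / h x = v at *
    generalize Mgrad M h x i = u at *
    generalize h x = H at *
    subst h5 h2
    have : 0 ≤ H * G := mul_nonneg hx.le h4
    refine this.trans_eq ?_
    field_simp
    ring
  have := Finset.sum_nonneg (fun i (_ : i ∈ Finset.univ) => main i)
  refine this.trans_eq ?_
  simp only [Finset.sum_sub_distrib, Finset.sum_add_distrib, Finset.mul_sum, Finset.sum_div,
    Finset.sum_mul]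
end
end

section
/- Let d ∈ ℕ and let U : ℝ^d → ℝ be a smooth function with U ≥ 0 such that, for some constants a₁, a₂, M, r > 0, a₁|x|² − M ≤ U(x) ≤ a₂|x|² + M and ∇U(x)·x ≥ r|x|² − M for all x. Let ε₀ > 0, l > 0, and let σ : (0, ε₀] → (0,∞) be smooth with σ(ε) ≥ lε and with both σ and its derivative ∂_εσ sub-exponential. For ε ∈ (0, ε₀] define δ(ε) by δ(ε)^{-1} = 4(1 + 1/√(a₁ l))(1 + ε/(2 r σ(ε)³)) and R_ε(x,y) = (σ(ε)/ε) U(x) + |y|²/2 + δ(ε) x·y. Then for every p ∈ ℕ there exists a sub-exponential function C_p : (0, ε₀] → (0,∞) such that for all ε ∈ (0, ε₀] and all (x,y) ∈ ℝ^d × ℝ^d, ∂_ε (R_ε(x,y)^p) ≤ C_p(ε) (|R_ε(x,y)|^p + 1). -/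
noncomputable section

open scoped BigOperators Topology
open Filter

/-- The coefficient δ(ε), defined by δ(ε)⁻¹ = 4(1 + 1/√(a₁l))(1 + ε/(2rσ(ε)³)). -/
def deltaFn (a₁ l r : ℝ) (σ : ℝ → ℝ) (ε : ℝ) : ℝ :=
  (4 * (1 + 1 / Real.sqrt (a₁ * l)) * (1 + ε / (2 * r * (σ ε) ^ 3)))⁻¹

/-- The Lyapunov function R_ε(x,y) = (σ(ε)/ε)U(x) + |y|²/2 + δ(ε) x·y. -/
def RFn {d : ℕ} (U : (Fin d → ℝ) → ℝ) (a₁ l r : ℝ) (σ : ℝ → ℝ) (ε : ℝ)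
    (x y : Fin d → ℝ) : ℝ :=
  (σ ε / ε) * U x + (∑ i, (y i) ^ 2) / 2 + deltaFn a₁ l r σ ε * ∑ i, x i * y i

lemma delta_deriv (a₁ l r : ℝ) (hr : 0 < r) (hl : 0 < l) (σ : ℝ → ℝ) (ε s' : ℝ)
    (hε : 0 < ε) (hs : HasDerivAt σ s' ε) (hσ : l * ε ≤ σ ε) :
    ∃ D, HasDerivAt (deltaFn a₁ l r σ) D ε ∧
      |D| ≤ (1 / (2 * r * l ^ 3) + 3 / (2 * r * l ^ 4)) * ((1 + |s'|) * (1 / ε) ^ 3) := by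
  have hle : 0 < l * ε := mul_pos hl hε
  have hσ0 : 0 < σ ε := lt_of_lt_of_le hle hσ
  set c : ℝ := 4 * (1 + 1 / Real.sqrt (a₁ * l)) with hc
  have hc4 : 4 ≤ c := by
    have : 0 ≤ 1 / Real.sqrt (a₁ * l) := by positivity
    rw [hc]; linarith
  have hden : 2 * r * (σ ε) ^ 3 ≠ 0 := by positivity
  set g : ℝ := 1 + ε / (2 * r * (σ ε) ^ 3) with hg
  have hg1 : 1 ≤ g := by
    have : 0 ≤ ε / (2 * r * (σ ε) ^ 3) := by positivity
    rw [hg]; linarith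
  have h1 : HasDerivAt (fun e => c * (1 + e / (2 * r * (σ e) ^ 3)))
      (c * ((1 * (2 * r * (σ ε) ^ 3) - ε * (2 * r * (((3 : ℕ) : ℝ) * (σ ε) ^ (3 - 1) * s'))) /
        (2 * r * (σ ε) ^ 3) ^ 2)) ε :=
    (((hasDerivAt_id ε).div ((hs.pow 3).const_mul (2 * r)) hden).const_add 1).const_mul c
  set g' := ((1 * (2 * r * (σ ε) ^ 3) - ε * (2 * r * (((3 : ℕ) : ℝ) * (σ ε) ^ (3 - 1) * s'))) /
        (2 * r * (σ ε) ^ 3) ^ 2) with hg'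
  have hcg : c * g ≠ 0 := by positivity
  refine ⟨_, h1.inv hcg, ?_⟩
  have hcg2 : c ≤ (c * g) ^ 2 := by
    have : c ≤ c * g := by nlinarith
    nlinarith
  have hb1 : |-(c * g') / (c * g) ^ 2| ≤ |g'| := by
    rw [abs_div, abs_neg, abs_mul, abs_of_pos (by positivity : 0 < (c * g) ^ 2),
      abs_of_pos (by linarith : 0 < c), div_le_iff₀ (by positivity)]
    nlinarith [abs_nonneg g']
  refine hb1.trans ?_
  have hgeq : g' = 1 / (2 * r * (σ ε) ^ 3) - 3 * ε * s' / (2 * r * (σ ε) ^ 4) := by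
    rw [hg']; field_simp; push_cast; ring
  have e1 : 1 / (2 * r * (σ ε) ^ 3) ≤ 1 / (2 * r * l ^ 3) * (1 / ε) ^ 3 := by
    have : 1 / (2 * r * l ^ 3) * (1 / ε) ^ 3 = 1 / (2 * r * (l * ε) ^ 3) := by
      field_simp
    rw [this]; gcongr
  have e2 : 3 * ε * |s'| / (2 * r * (σ ε) ^ 4) ≤ 3 / (2 * r * l ^ 4) * |s'| * (1 / ε) ^ 3 := by
    have : 3 / (2 * r * l ^ 4) * |s'| * (1 / ε) ^ 3 = 3 * ε * |s'| / (2 * r * (l * ε) ^ 4) := by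
      field_simp
    rw [this]; gcongr
  have e3 : |g'| ≤ 1 / (2 * r * (σ ε) ^ 3) + 3 * ε * |s'| / (2 * r * (σ ε) ^ 4) := by
    rw [hgeq]
    refine (abs_sub _ _).trans (le_of_eq ?_)
    rw [abs_of_pos (by positivity : 0 < 1 / (2 * r * (σ ε) ^ 3)), abs_div, abs_mul,
      abs_of_pos (by positivity : 0 < 3 * ε),
      abs_of_pos (by positivity : 0 < 2 * r * (σ ε) ^ 4)]
  have p1 : 0 ≤ 1 / (2 * r * l ^ 3) * (1 / ε) ^ 3 * |s'| := by positivity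
  have p2 : 0 ≤ 3 / (2 * r * l ^ 4) * (1 / ε) ^ 3 := by positivity
  nlinarith

lemma delta_bound (a₁ l r : ℝ) (ha₁ : 0 < a₁) (hr : 0 < r) (hl : 0 < l) (σ : ℝ → ℝ) (ε : ℝ)
    (hε : 0 < ε) (hσ0 : 0 < σ ε) :
    0 ≤ deltaFn a₁ l r σ ε ∧ (4 * deltaFn a₁ l r σ ε) ^ 2 ≤ a₁ * l := by
  have hq : 0 < Real.sqrt (a₁ * l) := Real.sqrt_pos.mpr (by positivity)
  have hsq : Real.sqrt (a₁ * l) ^ 2 = a₁ * l := Real.sq_sqrt (by positivity)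
  have h0 : 0 ≤ deltaFn a₁ l r σ ε := by unfold deltaFn; positivity
  refine ⟨h0, ?_⟩
  rw [← hsq]
  have : 4 * deltaFn a₁ l r σ ε ≤ Real.sqrt (a₁ * l) := by
    unfold deltaFn
    have hp : 0 ≤ ε / (2 * r * (σ ε) ^ 3) := by positivity
    have hi : 0 < 1 / Real.sqrt (a₁ * l) := by positivity
    have hle : 4 * (1 / Real.sqrt (a₁ * l)) ≤
        4 * (1 + 1 / Real.sqrt (a₁ * l)) * (1 + ε / (2 * r * (σ ε) ^ 3)) := by nlinarith
    calc 4 * (4 * (1 + 1 / Real.sqrt (a₁ * l)) * (1 + ε / (2 * r * (σ ε) ^ 3)))⁻¹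
        ≤ 4 * (4 * (1 / Real.sqrt (a₁ * l)))⁻¹ := by gcongr
      _ = Real.sqrt (a₁ * l) := by field_simp
  gcongr

lemma sum_cross {d : ℕ} (x y : Fin d → ℝ) (t : ℝ) :
    |t * ∑ i, x i * y i| ≤ (t ^ 2 * (∑ i, (x i) ^ 2) + ∑ i, (y i) ^ 2) / 2 := by
  have h1 : 0 ≤ ∑ i, (t * x i + y i) ^ 2 := Finset.sum_nonneg fun i _ => sq_nonneg _
  have h2 : 0 ≤ ∑ i, (t * x i - y i) ^ 2 := Finset.sum_nonneg fun i _ => sq_nonneg _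
  have e1 : ∑ i, (t * x i + y i) ^ 2 =
      t ^ 2 * (∑ i, (x i) ^ 2) + 2 * (t * ∑ i, x i * y i) + ∑ i, (y i) ^ 2 := by
    simp only [Finset.mul_sum, ← Finset.sum_add_distrib]
    exact Finset.sum_congr rfl fun i _ => by ring
  have e2 : ∑ i, (t * x i - y i) ^ 2 =
      t ^ 2 * (∑ i, (x i) ^ 2) - 2 * (t * ∑ i, x i * y i) + ∑ i, (y i) ^ 2 := by
    simp only [Finset.mul_sum, ← Finset.sum_add_distrib, ← Finset.sum_sub_distrib]
    exact Finset.sum_congr rfl fun i _ => by ring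
  rw [abs_le]; constructor <;> linarith

/-- Coercivity of `R`. -/
lemma R_lower {d : ℕ} (U : (Fin d → ℝ) → ℝ) (hU0 : ∀ x, 0 ≤ U x)
    (a₁ Mc r : ℝ) (ha₁ : 0 < a₁) (hMc : 0 < Mc) (hr : 0 < r)
    (hUlow : ∀ x, a₁ * (∑ i, (x i) ^ 2) - Mc ≤ U x)
    (l : ℝ) (hl : 0 < l) (σ : ℝ → ℝ) (ε : ℝ) (hε : 0 < ε) (hσ : l * ε ≤ σ ε)
    (x y : Fin d → ℝ) :
    l * U x + ∑ i, (y i) ^ 2 ≤ 4 * (RFn U a₁ l r σ ε x y + l * Mc) := by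
  have hσ0 : 0 < σ ε := lt_of_lt_of_le (mul_pos hl hε) hσ
  obtain ⟨h0, hb⟩ := delta_bound a₁ l r ha₁ hr hl σ ε hε hσ0
  have hA : l ≤ σ ε / ε := by rwa [le_div_iff₀ hε]
  have hX : 0 ≤ ∑ i, (x i) ^ 2 := Finset.sum_nonneg fun i _ => sq_nonneg _
  have hY : 0 ≤ ∑ i, (y i) ^ 2 := Finset.sum_nonneg fun i _ => sq_nonneg _
  have hcr := (abs_le.mp (sum_cross x y (4 * deltaFn a₁ l r σ ε))).1
  have h1 : (4 * deltaFn a₁ l r σ ε) ^ 2 * (∑ i, (x i) ^ 2) ≤ a₁ * l * ∑ i, (x i) ^ 2 := by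
    gcongr
  have h2 : a₁ * l * ∑ i, (x i) ^ 2 ≤ l * (U x + Mc) := by nlinarith [hUlow x]
  have h3 : l * U x ≤ σ ε / ε * U x := mul_le_mul_of_nonneg_right hA (hU0 x)
  have h4 : 0 ≤ l * U x := mul_nonneg hl.le (hU0 x)
  have h5 : 0 < l * Mc := by positivity
  unfold RFn
  linarith

lemma sub_one_add {f : ℝ → ℝ} {ε₀ : ℝ} (hε₀ : 0 < ε₀) (hf0 : ∀ ε ∈ Set.Ioc (0 : ℝ) ε₀, 0 < f ε)
    (hf : Tendsto (fun ε => ε * Real.log (f ε)) (𝓝[>] (0 : ℝ)) (𝓝 0)) :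
    Tendsto (fun ε => ε * Real.log (1 + f ε)) (𝓝[>] (0 : ℝ)) (𝓝 0) := by
  have hid : Tendsto (fun ε : ℝ => ε) (𝓝[>] (0 : ℝ)) (𝓝 0) :=
    tendsto_nhdsWithin_of_tendsto_nhds tendsto_id
  have hup : Tendsto (fun ε => ε * Real.log 2 + |ε * Real.log (f ε)|) (𝓝[>] (0 : ℝ)) (𝓝 0) := by
    simpa using (hid.mul_const (Real.log 2)).add hf.abs
  have hev : ∀ᶠ ε in 𝓝[>] (0 : ℝ), ε ∈ Set.Ioc (0 : ℝ) ε₀ := Ioc_mem_nhdsGT hε₀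
  refine squeeze_zero' ?_ ?_ hup
  · filter_upwards [hev] with ε h
    exact mul_nonneg h.1.le (Real.log_nonneg (by linarith [hf0 ε h]))
  · filter_upwards [hev] with ε h
    have h0 := hf0 ε h
    rw [abs_mul, abs_of_pos h.1, ← mul_add]
    refine mul_le_mul_of_nonneg_left ?_ h.1.le
    rcases le_total (f ε) 1 with h1 | h1
    · have : Real.log (1 + f ε) ≤ Real.log 2 := Real.log_le_log (by linarith) (by linarith)
      linarith [abs_nonneg (Real.log (f ε))]
    · have : Real.log (1 + f ε) ≤ Real.log (2 * f ε) :=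
        Real.log_le_log (by linarith) (by linarith)
      rw [Real.log_mul (by norm_num) h0.ne'] at this
      linarith [le_abs_self (Real.log (f ε))]

lemma sub_inv : Tendsto (fun ε : ℝ => ε * Real.log (1 + 1 / ε)) (𝓝[>] (0 : ℝ)) (𝓝 0) := by
  refine sub_one_add (f := fun ε => 1 / ε) one_pos (fun ε h => one_div_pos.mpr h.1) ?_
  have h : Tendsto (fun ε : ℝ => ε * Real.log ε) (𝓝[>] (0 : ℝ)) (𝓝 0) := by
    have := Real.continuous_mul_log.tendsto 0
    simp only [zero_mul] at this
    exact tendsto_nhdsWithin_of_tendsto_nhds this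
  simpa using h.neg

/-- For every p ∈ ℕ there is a sub-exponential function C_p with
∂_ε(R_ε(x,y)^p) ≤ C_p(ε)(|R_ε(x,y)|^p + 1). -/
theorem stmt10 {d : ℕ} (U : (Fin d → ℝ) → ℝ) (hU : ContDiff ℝ (⊤ : ℕ∞) U)
    (hU0 : ∀ x, 0 ≤ U x)
    (a₁ a₂ Mc r : ℝ) (ha₁ : 0 < a₁) (ha₂ : 0 < a₂) (hMc : 0 < Mc) (hr : 0 < r)
    (hUlow : ∀ x, a₁ * (∑ i, (x i) ^ 2) - Mc ≤ U x)
    (hUup : ∀ x, U x ≤ a₂ * (∑ i, (x i) ^ 2) + Mc)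
    (hUgrad : ∀ x, r * (∑ i, (x i) ^ 2) - Mc ≤ ∑ i, gradU U i x * x i)
    (ε₀ l : ℝ) (hε₀ : 0 < ε₀) (hl : 0 < l)
    (σ : ℝ → ℝ) (hσsmooth : ContDiffOn ℝ (⊤ : ℕ∞) σ (Set.Ioi (0 : ℝ)))
    (hσpos : ∀ ε ∈ Set.Ioc (0 : ℝ) ε₀, 0 < σ ε)
    (hσl : ∀ ε ∈ Set.Ioc (0 : ℝ) ε₀, l * ε ≤ σ ε)
    (hσsub : Tendsto (fun ε => ε * Real.log (σ ε)) (𝓝[>] (0 : ℝ)) (𝓝 0))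
    (hσ'sub : Tendsto (fun ε => ε * Real.log (1 + |deriv σ ε|)) (𝓝[>] (0 : ℝ)) (𝓝 0))
    (p : ℕ) :
    ∃ C : ℝ → ℝ, (∀ ε ∈ Set.Ioc (0 : ℝ) ε₀, 0 < C ε) ∧
      Tendsto (fun ε => ε * Real.log (C ε)) (𝓝[>] (0 : ℝ)) (𝓝 0) ∧
      ∀ ε ∈ Set.Ioc (0 : ℝ) ε₀, ∀ x y : Fin d → ℝ,
        deriv (fun e => (RFn U a₁ l r σ e x y) ^ p) ε
          ≤ C ε * (|RFn U a₁ l r σ ε x y| ^ p + 1) := by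
  obtain ⟨K1, hK1, hK1d⟩ : ∃ K1 : ℝ, 0 < K1 ∧
      K1 = 1 / (2 * r * l ^ 3) + 3 / (2 * r * l ^ 4) := ⟨_, by positivity, rfl⟩
  have hid : Tendsto (fun ε : ℝ => ε) (𝓝[>] (0 : ℝ)) (𝓝 0) :=
    tendsto_nhdsWithin_of_tendsto_nhds tendsto_id
  -- bound for `U` and `(X + Y)`: both at most `K2 * (|R| + 1)`
  obtain ⟨K2, hK2, hK2b⟩ : ∃ K2 : ℝ, 0 < K2 ∧ ∀ ε ∈ Set.Ioc (0 : ℝ) ε₀, ∀ x y : Fin d → ℝ,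
      U x ≤ K2 * (|RFn U a₁ l r σ ε x y| + 1) ∧
      (∑ i, (x i) ^ 2) + (∑ i, (y i) ^ 2) ≤ K2 * (|RFn U a₁ l r σ ε x y| + 1) := by
    refine ⟨(4 + 4 * l * Mc) / l + ((4 + 4 * l * Mc) / l + Mc) / a₁ + (4 + 4 * l * Mc),
      by positivity, ?_⟩
    intro ε hε x y
    have hR := R_lower U hU0 a₁ Mc r ha₁ hMc hr hUlow l hl σ ε hε.1 (hσl ε hε) x y
    set Q := RFn U a₁ l r σ ε x y
    have hX : 0 ≤ ∑ i, (x i) ^ 2 := Finset.sum_nonneg fun i _ => sq_nonneg _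
    have hY : 0 ≤ ∑ i, (y i) ^ 2 := Finset.sum_nonneg fun i _ => sq_nonneg _
    have hlU : 0 ≤ l * U x := mul_nonneg hl.le (hU0 x)
    have hQ0 := abs_nonneg Q
    have hlM : 0 < l * Mc := by positivity
    have hQ : 4 * (Q + l * Mc) ≤ (4 + 4 * l * Mc) * (|Q| + 1) := by
      nlinarith [le_abs_self Q, mul_nonneg hlM.le hQ0]
    have hU1 : U x ≤ (4 + 4 * l * Mc) / l * (|Q| + 1) := by
      rw [div_mul_eq_mul_div, le_div_iff₀ hl]; linarith
    have hY1 : ∑ i, (y i) ^ 2 ≤ (4 + 4 * l * Mc) * (|Q| + 1) := by linarith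
    have hX1 : ∑ i, (x i) ^ 2 ≤ ((4 + 4 * l * Mc) / l + Mc) / a₁ * (|Q| + 1) := by
      rw [div_mul_eq_mul_div, le_div_iff₀ ha₁]
      nlinarith [hUlow x, mul_nonneg hMc.le hQ0]
    have q1 : 0 ≤ (4 + 4 * l * Mc) / l * (|Q| + 1) := by positivity
    have q2 : 0 ≤ ((4 + 4 * l * Mc) / l + Mc) / a₁ * (|Q| + 1) := by positivity
    have q3 : 0 ≤ (4 + 4 * l * Mc) * (|Q| + 1) := by positivity
    constructor <;> linarith
  set K : ℝ := 2 * (p + 1) * ((1 + K1) * K2) with hK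
  have hKpos : 0 < K := by positivity
  refine ⟨fun ε => K * ((1 + |deriv σ ε|) * (1 + σ ε) * (1 + 1 / ε) ^ 3), ?_, ?_, ?_⟩
  · intro ε hε
    have := hσpos ε hε
    have := hε.1
    positivity
  · have h := (((hid.mul_const (Real.log K)).add hσ'sub).add
      (sub_one_add hε₀ hσpos hσsub)).add (sub_inv.const_mul 3)
    simp only [zero_mul, mul_zero, add_zero] at h
    refine h.congr' ?_
    have hev : ∀ᶠ ε in 𝓝[>] (0 : ℝ), ε ∈ Set.Ioc (0 : ℝ) ε₀ := Ioc_mem_nhdsGT hε₀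
    filter_upwards [hev] with ε hε
    have h1 := hσpos ε hε
    have h2 := hε.1
    have e1 : 1 + |deriv σ ε| ≠ 0 := by positivity
    have e2 : 1 + σ ε ≠ 0 := by positivity
    have e3 : (1 + 1 / ε) ^ 3 ≠ 0 := by positivity
    rw [Real.log_mul hKpos.ne' (by positivity), Real.log_mul (mul_ne_zero e1 e2) e3,
      Real.log_mul e1 e2, Real.log_pow]
    push_cast
    ring
  · intro ε hε x y
    have hε0 := hε.1
    have hs0 := hσpos ε hε
    have hs : HasDerivAt σ (deriv σ ε) ε :=
      (((hσsmooth.differentiableOn (by simp)) ε hε0).differentiableAt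
        (Ioi_mem_nhds hε0)).hasDerivAt
    obtain ⟨D, hD, hDb⟩ := delta_deriv a₁ l r hr hl σ ε _ hε0 hs (hσl ε hε)
    rw [← hK1d] at hDb
    obtain ⟨hb1, hb2⟩ := hK2b ε hε x y
    have hA : HasDerivAt (fun e => σ e / e) ((deriv σ ε * ε - σ ε * 1) / ε ^ 2) ε :=
      hs.div (hasDerivAt_id ε) hε0.ne'
    have hRd : HasDerivAt (fun e => RFn U a₁ l r σ e x y)
        ((deriv σ ε * ε - σ ε * 1) / ε ^ 2 * U x + D * ∑ i, x i * y i) ε :=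
      ((hA.mul_const (U x)).add_const _).add (hD.mul_const _)
    rw [(hRd.fun_pow p).deriv]
    set Q := RFn U a₁ l r σ ε x y with hQ
    set s' := deriv σ ε
    set W := (1 + |s'|) * (1 + σ ε) * (1 + 1 / ε) ^ 3 with hW
    have hz : 0 < 1 / ε := by positivity
    have hW0 : 0 < W := by positivity
    have hAb : |(s' * ε - σ ε * 1) / ε ^ 2| ≤ W := by
      have : (s' * ε - σ ε * 1) / ε ^ 2 = s' * (1 / ε) - σ ε * (1 / ε) ^ 2 := by
        field_simp
      rw [this]
      refine (abs_sub _ _).trans ?_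
      rw [abs_mul, abs_mul, abs_of_pos hz, abs_of_pos hs0, abs_of_pos (by positivity :
        0 < (1 / ε) ^ 2), hW]
      set z := 1 / ε
      have z1 : z ≤ (1 + z) ^ 3 := by nlinarith [pow_pos hz 2, pow_pos hz 3]
      have z2 : z ^ 2 ≤ (1 + z) ^ 3 := by nlinarith [pow_pos hz 2, pow_pos hz 3]
      have t1 : |s'| * z ≤ |s'| * (1 + z) ^ 3 := by gcongr
      have t2 : σ ε * z ^ 2 ≤ σ ε * (1 + z) ^ 3 := by gcongr
      have t3 : 0 ≤ (1 + |s'| * σ ε) * (1 + z) ^ 3 := by positivity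
      nlinarith
    have hDb' : |D| ≤ K1 * W := by
      refine hDb.trans (mul_le_mul_of_nonneg_left ?_ hK1.le)
      rw [hW]
      have : (1 / ε) ^ 3 ≤ (1 + 1 / ε) ^ 3 := by gcongr; linarith
      calc (1 + |s'|) * (1 / ε) ^ 3 ≤ (1 + |s'|) * (1 + 1 / ε) ^ 3 := by gcongr
        _ ≤ (1 + |s'|) * (1 + σ ε) * (1 + 1 / ε) ^ 3 := by
          gcongr
          have := abs_nonneg s'
          nlinarith
    have hcr : |∑ i, x i * y i| ≤ K2 * (|Q| + 1) := by
      have h := sum_cross x y 1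
      rw [one_mul, one_pow, one_mul] at h
      have : 0 ≤ K2 * (|Q| + 1) := by positivity
      linarith
    have hUabs : |U x| ≤ K2 * (|Q| + 1) := by rwa [abs_of_nonneg (hU0 x)]
    have hR' : |(s' * ε - σ ε * 1) / ε ^ 2 * U x + D * ∑ i, x i * y i| ≤
        (1 + K1) * K2 * W * (|Q| + 1) := by
      refine (abs_add_le _ _).trans ?_
      rw [abs_mul, abs_mul]
      calc _ ≤ W * (K2 * (|Q| + 1)) + K1 * W * (K2 * (|Q| + 1)) := by gcongr
        _ = _ := by ring
    set R' := (s' * ε - σ ε * 1) / ε ^ 2 * U x + D * ∑ i, x i * y i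
    have hQ0 := abs_nonneg Q
    rcases p with _ | n
    · simp only [Nat.cast_zero, zero_mul]
      positivity
    · rw [Nat.add_sub_cancel]
      have hpow : |Q| ^ n * (|Q| + 1) ≤ 2 * (|Q| ^ (n + 1) + 1) := by
        have hn : |Q| ^ n ≤ |Q| ^ (n + 1) + 1 := by
          rcases le_total |Q| 1 with h | h
          · have := pow_le_one₀ (n := n) hQ0 h
            have : 0 ≤ |Q| ^ (n + 1) := by positivity
            linarith
          · have := pow_le_pow_right₀ h (Nat.le_succ n)
            simp only [Nat.succ_eq_add_one] at this
            linarith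
        have : |Q| ^ n * |Q| = |Q| ^ (n + 1) := (pow_succ _ _).symm
        linarith
      have hP : 0 ≤ (1 + K1) * K2 * W := by positivity
      calc ((n + 1 : ℕ) : ℝ) * Q ^ n * R' ≤ |((n + 1 : ℕ) : ℝ) * Q ^ n * R'| := le_abs_self _
        _ = ((n + 1 : ℕ) : ℝ) * |Q| ^ n * |R'| := by
          rw [abs_mul, abs_mul, abs_pow, Nat.abs_cast]
        _ ≤ ((n + 1 : ℕ) : ℝ) * |Q| ^ n * ((1 + K1) * K2 * W * (|Q| + 1)) := by gcongr
        _ = ((n + 1 : ℕ) : ℝ) * ((1 + K1) * K2 * W) * (|Q| ^ n * (|Q| + 1)) := by ring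
        _ ≤ ((n + 1 : ℕ) : ℝ) * ((1 + K1) * K2 * W) * (2 * (|Q| ^ (n + 1) + 1)) := by gcongr
        _ ≤ (((n + 1 : ℕ) : ℝ) + 1) * ((1 + K1) * K2 * W) * (2 * (|Q| ^ (n + 1) + 1)) := by
          gcongr; linarith
        _ = K * W * (|Q| ^ (n + 1) + 1) := by rw [hK]; ring
end
end

section
/- Let w : (0,∞) → (0,∞) be sub-exponential, i.e. ε ln w(ε) → 0 as ε → 0⁺. Let (ε_t)_{t ≥ 1} be positive with ε_t → 0 as t → ∞ and with liminf_{t→∞} ε_t ln t > 0. Then for every α > 0, t^{−α} w(ε_t) → 0 as t → ∞. -/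
open scoped Topology
open Filter

/-- If `w` is sub-exponential (`ε ln w(ε) → 0` as `ε → 0⁺`), `ε_t → 0` and
`liminf_{t→∞} ε_t ln t > 0`, then `t^{−α} w(ε_t) → 0` as `t → ∞` for every `α > 0`. -/
theorem stmt12 (w : ℝ → ℝ) (hwpos : ∀ ε > (0 : ℝ), 0 < w ε)
    (hwsub : Tendsto (fun ε => ε * Real.log (w ε)) (𝓝[>] (0 : ℝ)) (𝓝 0))
    (ε : ℝ → ℝ) (hεpos : ∀ t ≥ (1 : ℝ), 0 < ε t)
    (hε0 : Tendsto ε atTop (𝓝 0))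
    (hliminf : ∃ c > (0 : ℝ), ∀ᶠ t in atTop, c ≤ ε t * Real.log t) :
    ∀ α > (0 : ℝ),
      Tendsto (fun t : ℝ => t ^ (-α) * w (ε t)) atTop (𝓝 0) := by
  intro α hα
  obtain ⟨c, hc, hcl⟩ := hliminf
  have hε1 : Tendsto ε atTop (𝓝[>] (0 : ℝ)) := by
    refine tendsto_nhdsWithin_iff.2 ⟨hε0, ?_⟩
    filter_upwards [eventually_ge_atTop (1 : ℝ)] with t ht
    exact hεpos t ht
  have h1 : ∀ᶠ t in atTop, ε t * Real.log (w (ε t)) < c * (α / 2) :=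
    (hwsub.comp hε1).eventually_lt_const (by positivity)
  have hlim : Tendsto (fun t : ℝ => t ^ (-(α / 2))) atTop (𝓝 0) :=
    tendsto_rpow_neg_atTop (by positivity)
  refine tendsto_of_tendsto_of_tendsto_of_le_of_le' tendsto_const_nhds hlim ?_ ?_
  · filter_upwards [eventually_ge_atTop (1 : ℝ)] with t ht
    have h0 : 0 < t := by linarith
    have hw := hwpos _ (hεpos t ht)
    positivity
  · filter_upwards [eventually_ge_atTop (1 : ℝ), h1, hcl] with t ht h1t hct
    have h0 : 0 < t := by linarith
    have he := hεpos t ht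
    have hw := hwpos _ he
    have h2 : ε t * Real.log (w (ε t)) ≤ ε t * (Real.log t * (α / 2)) := by
      have h3 := mul_le_mul_of_nonneg_right hct (by positivity : 0 ≤ α / 2)
      rw [mul_assoc] at h3
      linarith
    have h3 : Real.log (w (ε t)) ≤ Real.log t * (α / 2) := le_of_mul_le_mul_left h2 he
    have h4 : w (ε t) ≤ t ^ (α / 2) := by
      rw [Real.rpow_def_of_pos h0, ← Real.log_le_iff_le_exp hw]
      exact h3
    calc t ^ (-α) * w (ε t) ≤ t ^ (-α) * t ^ (α / 2) := by gcongr
      _ = t ^ (-(α / 2)) := by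
        rw [← Real.rpow_add h0]
        congr 1
        ring
end

section
/- Let d ∈ ℕ, T > 0, and let F : [0,T] × ℝ^d × ℝ^d → ℝ^d be continuous and continuously differentiable in the space variables. Then for all z₀ = (x₀, y₀) and z₁ = (x₁, y₁) in ℝ^d × ℝ^d and every η > 0, there exist a continuous control u : [0,T] → ℝ^d and a C¹ curve z = (x,y) : [0,T] → ℝ^d × ℝ^d such that x'(t) = y(t) and y'(t) = F(t, x(t), y(t)) + u(t) for all t ∈ [0,T], z(0) = z₀, and |z(T) − z₁| ≤ η. -/
open scoped BigOperators

/-- Approximate controllability of the deterministic kinetic control system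
x' = y, y' = F(t,x,y) + u: from any initial state one can steer arbitrarily
close to any target state in time T with a continuous control acting on the
velocity only. -/
theorem stmt15 {d : ℕ} (T : ℝ) (hT : 0 < T)
    (F : ℝ → (Fin d → ℝ) → (Fin d → ℝ) → (Fin d → ℝ))
    (hFcont : ContinuousOn
      (fun p : ℝ × ((Fin d → ℝ) × (Fin d → ℝ)) => F p.1 p.2.1 p.2.2)
      (Set.Icc 0 T ×ˢ (Set.univ : Set ((Fin d → ℝ) × (Fin d → ℝ)))))
    (hFdiff : ∀ t ∈ Set.Icc (0 : ℝ) T,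
      ContDiff ℝ 1 fun q : (Fin d → ℝ) × (Fin d → ℝ) => F t q.1 q.2)
    (x₀ y₀ x₁ y₁ : Fin d → ℝ) (η : ℝ) (hη : 0 < η) :
    ∃ u : ℝ → Fin d → ℝ, ContinuousOn u (Set.Icc 0 T) ∧
      ∃ x y : ℝ → Fin d → ℝ,
        (∀ t ∈ Set.Icc (0 : ℝ) T,
          HasDerivAt x (y t) t ∧ HasDerivAt y (F t (x t) (y t) + u t) t) ∧
        x 0 = x₀ ∧ y 0 = y₀ ∧
        Real.sqrt ((∑ i, (x T i - x₁ i) ^ 2) + ∑ i, (y T i - y₁ i) ^ 2) ≤ η := by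
  have hT0 : T ≠ 0 := hT.ne'
  let a : Fin d → ℝ := fun i => (3 * (x₁ i - x₀ i - y₀ i * T) - (y₁ i - y₀ i) * T) / T ^ 2
  let b : Fin d → ℝ := fun i => ((y₁ i - y₀ i) * T - 2 * (x₁ i - x₀ i - y₀ i * T)) / T ^ 3
  let x : ℝ → Fin d → ℝ := fun t i => x₀ i + y₀ i * t + a i * t ^ 2 + b i * t ^ 3
  let y : ℝ → Fin d → ℝ := fun t i => y₀ i + 2 * a i * t + 3 * b i * t ^ 2
  let w : ℝ → Fin d → ℝ := fun t i => 2 * a i + 6 * b i * t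
  have hx : ∀ t, HasDerivAt x (y t) t := by
    intro t
    rw [hasDerivAt_pi]
    intro i
    have h := ((((hasDerivAt_id t).const_mul (y₀ i)).const_add (x₀ i)).add
      ((hasDerivAt_pow 2 t).const_mul (a i))).add ((hasDerivAt_pow 3 t).const_mul (b i))
    refine HasDerivAt.congr_deriv (f := fun s => x s i) h ?_
    simp only [y]
    push_cast
    ring
  have hy : ∀ t, HasDerivAt y (w t) t := by
    intro t
    rw [hasDerivAt_pi]
    intro i
    have h := (((hasDerivAt_id t).const_mul (2 * a i)).const_add (y₀ i)).add
      ((hasDerivAt_pow 2 t).const_mul (3 * b i))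
    refine HasDerivAt.congr_deriv (f := fun s => y s i) h ?_
    simp only [w]
    push_cast
    ring
  have hxc : Continuous x := continuous_iff_continuousAt.2 fun t => (hx t).continuousAt
  have hyc : Continuous y := continuous_iff_continuousAt.2 fun t => (hy t).continuousAt
  have hwc : Continuous w := by
    refine continuous_pi fun i => ?_
    simp only [w]
    fun_prop
  have hF : ContinuousOn (fun t => F t (x t) (y t)) (Set.Icc 0 T) :=
    hFcont.comp (f := fun t => (t, (x t, y t)))
      (continuous_id.prodMk (hxc.prodMk hyc)).continuousOn
      (fun t ht => ⟨ht, Set.mem_univ _⟩)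
  have hxT : ∀ i, x T i = x₁ i := by
    intro i
    simp only [x, a, b]
    field_simp
    ring
  have hyT : ∀ i, y T i = y₁ i := by
    intro i
    simp only [y, a, b]
    field_simp
    ring
  refine ⟨fun t => w t - F t (x t) (y t), hwc.continuousOn.sub hF, x, y, ?_, ?_, ?_, ?_⟩
  · intro t _
    refine ⟨hx t, ?_⟩
    have h : F t (x t) (y t) + (w t - F t (x t) (y t)) = w t := by abel
    rw [h]
    exact hy t
  · funext i
    simp [x]
  · funext i
    simp [y]
  · simp [hxT, hyT, hη.le]
end

section
/- Fix κ > 0 and define l : ℝ → ℝ by l(v) = 1 for v ≤ −π/κ, l(v) = (−κv − sin(κv))/(2π) + 1/2 for −π/κ ≤ v ≤ π/κ, and l(v) = 0 for v ≥ π/κ. Then l is twice continuously differentiable on ℝ, non-increasing, takes values in [0,1], its second derivative satisfies l''(v) = (κ²/(2π)) sin(κv) for v ∈ [−π/κ, π/κ] and l''(v) = 0 otherwise, and l''(v) ≥ −(κ²/π) l(v) for all v ∈ ℝ. -/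
noncomputable section

open Real

/-- The C² cutoff profile: l(v) = 1 for v ≤ −π/κ,
l(v) = (−κv − sin(κv))/(2π) + 1/2 for −π/κ ≤ v ≤ π/κ, and l(v) = 0 for v ≥ π/κ. -/
def lfun (κ : ℝ) (v : ℝ) : ℝ :=
  if v ≤ -(π / κ) then 1
  else if v ≤ π / κ then (-(κ * v) - Real.sin (κ * v)) / (2 * π) + 1 / 2
  else 0

theorem glue_hasDerivAt (a : ℝ) (f g f' g' : ℝ → ℝ) (hf : ∀ v, HasDerivAt f (f' v) v)
    (hg : ∀ v, HasDerivAt g (g' v) v) (h0 : f a = g a) (h1 : f' a = g' a) (v : ℝ) :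
    HasDerivAt (fun v => if v ≤ a then f v else g v) (if v ≤ a then f' v else g' v) v := by
  rcases lt_trichotomy v a with h | h | h
  · rw [if_pos h.le]
    refine (hf v).congr_of_eventuallyEq ?_
    filter_upwards [Iio_mem_nhds h] with w hw
    exact if_pos (le_of_lt hw)
  · subst h
    rw [if_pos le_rfl]
    have hl : HasDerivWithinAt (fun w => if w ≤ v then f w else g w) (f' v) (Set.Iic v) v := by
      refine (hf v).hasDerivWithinAt.congr (fun w hw => if_pos hw) (if_pos le_rfl)
    have hr : HasDerivWithinAt (fun w => if w ≤ v then f w else g w) (f' v) (Set.Ici v) v := by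
      rw [h1]
      refine (hg v).hasDerivWithinAt.congr (fun w hw => ?_) ?_
      · rcases eq_or_lt_of_le (show v ≤ w from hw) with e | e
        · subst e; simp [h0]
        · exact if_neg (not_le.mpr e)
      · simp [h0]
    have := hl.union hr
    rwa [Set.Iic_union_Ici, hasDerivWithinAt_univ] at this
  · rw [if_neg (not_le.mpr h)]
    refine (hg v).congr_of_eventuallyEq ?_
    filter_upwards [Ioi_mem_nhds h] with w hw
    exact if_neg (not_le.mpr hw)

theorem glue3_hasDerivAt (b a : ℝ) (hab : b < a) (c d : ℝ) (g g' : ℝ → ℝ)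
    (hg : ∀ v, HasDerivAt g (g' v) v) (hb : g b = c) (ha : g a = d)
    (hb' : g' b = 0) (ha' : g' a = 0) (v : ℝ) :
    HasDerivAt (fun v => if v ≤ b then c else if v ≤ a then g v else d)
      (if v ≤ b then 0 else if v ≤ a then g' v else 0) v := by
  have h1 := glue_hasDerivAt a g (fun _ => d) g' (fun _ => 0) hg
    (fun v => hasDerivAt_const v d) ha ha'
  refine glue_hasDerivAt b (fun _ => c) _ (fun _ => 0) _ (fun v => hasDerivAt_const v c) h1 ?_ ?_ v
  · simp [hab.le, hb]
  · simp [hab.le, hb']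

/-- The cutoff profile `lfun κ` is C², non-increasing, [0,1]-valued, its second
derivative is (κ²/(2π))sin(κv) on [−π/κ, π/κ] and 0 outside, and satisfies
l'' ≥ −(κ²/π) l everywhere. -/
theorem stmt16 (κ : ℝ) (hκ : 0 < κ) :
    ContDiff ℝ 2 (lfun κ) ∧
    Antitone (lfun κ) ∧
    (∀ v, lfun κ v ∈ Set.Icc (0 : ℝ) 1) ∧
    (∀ v ∈ Set.Icc (-(π / κ)) (π / κ),
      deriv (deriv (lfun κ)) v = κ ^ 2 / (2 * π) * Real.sin (κ * v)) ∧
    (∀ v, v ∉ Set.Icc (-(π / κ)) (π / κ) → deriv (deriv (lfun κ)) v = 0) ∧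
    (∀ v, -(κ ^ 2 / π) * lfun κ v ≤ deriv (deriv (lfun κ)) v) := by
  have hπ := Real.pi_pos
  have hpos : 0 < π / κ := div_pos hπ hκ
  have hlt : -(π / κ) < π / κ := by linarith
  have ea : κ * (π / κ) = π := by field_simp
  have eb : κ * (-(π / κ)) = -π := by rw [mul_neg, ea]
  set D1 : ℝ → ℝ := fun v => if v ≤ -(π / κ) then 0 else if v ≤ π / κ then
    (-κ - Real.cos (κ * v) * κ) / (2 * π) else 0 with hD1
  set D2 : ℝ → ℝ := fun v => if v ≤ -(π / κ) then 0 else if v ≤ π / κ then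
    κ ^ 2 / (2 * π) * Real.sin (κ * v) else 0 with hD2
  have lin : ∀ v, HasDerivAt (fun v : ℝ => κ * v) κ v := fun v => by
    simpa using (hasDerivAt_id v).const_mul κ
  have H1 : ∀ v, HasDerivAt (lfun κ) (D1 v) v := by
    refine glue3_hasDerivAt _ _ hlt 1 0
      (fun v => (-(κ * v) - Real.sin (κ * v)) / (2 * π) + 1 / 2)
      (fun v => (-κ - Real.cos (κ * v) * κ) / (2 * π)) ?_ ?_ ?_ ?_ ?_
    · intro v
      exact (((lin v).neg.sub (lin v).sin).div_const _).add_const _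
    · simp only [eb, Real.sin_neg, Real.sin_pi]; field_simp; ring
    · simp only [ea, Real.sin_pi]; field_simp; norm_num
    · simp only [eb, Real.cos_neg, Real.cos_pi]; simp
    · simp only [ea, Real.cos_pi]; simp
  have H2 : ∀ v, HasDerivAt D1 (D2 v) v := by
    refine glue3_hasDerivAt _ _ hlt 0 0
      (fun v => (-κ - Real.cos (κ * v) * κ) / (2 * π))
      (fun v => κ ^ 2 / (2 * π) * Real.sin (κ * v)) ?_ ?_ ?_ ?_ ?_
    · intro v
      have := (((lin v).cos.mul_const κ).const_sub (-κ)).div_const (2 * π)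
      refine this.congr_deriv ?_
      show _ = κ ^ 2 / (2 * π) * Real.sin (κ * v)
      ring
    · simp only [eb, Real.cos_neg, Real.cos_pi]; simp
    · simp only [ea, Real.cos_pi]; simp
    · simp only [eb, Real.sin_neg, Real.sin_pi]; simp
    · simp only [ea, Real.sin_pi]; simp
  have d1 : deriv (lfun κ) = D1 := funext fun v => (H1 v).deriv
  have d2 : deriv D1 = D2 := funext fun v => (H2 v).deriv
  have c2 : Continuous D2 := by
    refine Continuous.if_le continuous_const (Continuous.if_le (by fun_prop) continuous_const
      continuous_id continuous_const ?_) continuous_id continuous_const ?_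
    · rintro x rfl; simp [ea]
    · rintro x rfl; simp only [eb]; simp
  have anti : Antitone (lfun κ) := by
    refine antitone_of_deriv_nonpos (fun v => (H1 v).differentiableAt) fun v => ?_
    rw [d1, hD1]
    dsimp only
    split_ifs
    · exact le_rfl
    · apply div_nonpos_of_nonpos_of_nonneg _ (by positivity)
      nlinarith [Real.neg_one_le_cos (κ * v)]
    · exact le_rfl
  have l1 : ∀ v, v ≤ -(π / κ) → lfun κ v = 1 := fun v hv => if_pos hv
  have l0 : ∀ v, π / κ < v → lfun κ v = 0 := fun v hv => by
    unfold lfun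
    rw [if_neg (by linarith), if_neg (by linarith)]
  have rng : ∀ v, lfun κ v ∈ Set.Icc (0 : ℝ) 1 := fun v => by
    constructor
    · rw [← l0 (max v (π / κ) + 1) (by linarith [le_max_right v (π / κ)])]
      exact anti (by linarith [le_max_left v (π / κ)])
    · rw [← l1 (min v (-(π / κ))) (min_le_right _ _)]
      exact anti (min_le_left _ _)
  rw [d1, d2]
  refine ⟨?_, anti, rng, ?_, ?_, ?_⟩
  · rw [show (2 : WithTop ℕ∞) = 1 + 1 by norm_num, contDiff_succ_iff_deriv]
    refine ⟨fun v => (H1 v).differentiableAt, by simp, ?_⟩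
    rw [d1, contDiff_one_iff_deriv, d2]
    exact ⟨fun v => (H2 v).differentiableAt, c2⟩
  · rintro v ⟨h1, h2⟩
    rw [hD2]
    dsimp only
    split_ifs with h
    · obtain rfl : v = -(π / κ) := le_antisymm h h1
      rw [eb]; simp
    · rfl
  · intro v hv
    rw [hD2]
    dsimp only
    split_ifs with h h'
    · rfl
    · exact absurd ⟨(not_le.mp h).le, h'⟩ hv
    · rfl
  · intro v
    rw [hD2]
    unfold lfun
    dsimp only
    split_ifs with h h'
    · have : 0 < κ ^ 2 / π := by positivity
      linarith
    · have hx1 : -π ≤ κ * v := by rw [← eb]; exact mul_le_mul_of_nonneg_left (not_le.mp h).le hκ.le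
      have hx2 : κ * v ≤ π := by
        calc κ * v ≤ κ * (π / κ) := mul_le_mul_of_nonneg_left h' hκ.le
          _ = π := ea
      generalize κ * v = x at hx1 hx2
      have key : 0 ≤ (π - 1) * Real.sin x + π - x := by
        have h3 := Real.pi_gt_three
        rcases le_total 0 x with h0 | h0
        · nlinarith [Real.sin_nonneg_of_nonneg_of_le_pi h0 hx2]
        · nlinarith [Real.neg_one_le_sin x]
      have e : κ ^ 2 / (2 * π) * Real.sin x
          - -(κ ^ 2 / π) * ((-x - Real.sin x) / (2 * π) + 1 / 2)
          = κ ^ 2 / (2 * π ^ 2) * ((π - 1) * Real.sin x + π - x) := by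
        field_simp
        ring
      have : 0 ≤ κ ^ 2 / (2 * π ^ 2) * ((π - 1) * Real.sin x + π - x) :=
        mul_nonneg (by positivity) key
      linarith
    · simp
end
end
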